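/- arXiv:math/0702117 — 3 statements merged into one kernel-verified Lean document; each statement's English description precedes it below -/
import Mathlib

section
/- Let G be a hyperbolic group which is torsion-free (every nontrivial element has infinite order), nontrivial, and not elementary, i.e. not virtually cyclic. Then the center Z(G) of G is trivial. -/
/-- The word metric on a group `G` with respect to a generating set `S`:
`wordDist S g h` is the least length of a word in `S ∪ S⁻¹` representing `g⁻¹ * h`. -/
noncomputable def wordDist {G : Type*} [Group G] (S : Set G) (g h : G) : ℝ :=
  sInf {r : ℝ | ∃ l : List G, (∀ x ∈ l, x ∈ S ∨ x⁻¹ ∈ S) ∧ l.prod = g⁻¹ * h ∧ r = l.length}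

/-- The Gromov product `(x|y)_w` with respect to the word metric for `S`. -/
noncomputable def gromovProd {G : Type*} [Group G] (S : Set G) (w x y : G) : ℝ :=
  (wordDist S x w + wordDist S y w - wordDist S x y) / 2

/-- A group is (Gromov) hyperbolic if it admits a finite generating set `S` such that
the word metric `d_S` satisfies the Gromov product four-point condition for some `δ ≥ 0`. -/
def IsHyperbolicGroup (G : Type*) [Group G] : Prop :=
  ∃ S : Set G, S.Finite ∧ Subgroup.closure S = ⊤ ∧
    ∃ δ : ℝ, 0 ≤ δ ∧ ∀ w x y z : G,
      gromovProd S w x y ≥ min (gromovProd S w x z) (gromovProd S w y z) - δ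

lemma exists_len {G : Type*} [Group G] (S : Set G) (hS : S.Finite)
    (hgen : Subgroup.closure S = ⊤) :
    ∃ N : G → ℕ, (∀ g h, wordDist S g h = N (g⁻¹ * h)) ∧ (∀ g, N g⁻¹ = N g) ∧
      (∀ k, {g | N g ≤ k}.Finite) ∧
      (∀ g, ∃ p, N p ≤ N g / 2 ∧ N (p⁻¹ * g) ≤ N g - N g / 2) := by
  classical
  let A : Set G := {x | x ∈ S ∨ x⁻¹ ∈ S}
  have hA : A.Finite := by
    have : A = S ∪ S⁻¹ := by ext x; simp [A]
    rw [this]; exact hS.union hS.inv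
  have hex : ∀ g : G, ∃ n : ℕ, ∃ l : List G, (∀ x ∈ l, x ∈ S ∨ x⁻¹ ∈ S) ∧ l.prod = g ∧
      n = l.length := by
    intro g
    have hg : g ∈ Subgroup.closure S := by rw [hgen]; trivial
    rw [← Subgroup.mem_toSubmonoid, Subgroup.closure_toSubmonoid] at hg
    obtain ⟨l, hl, hp⟩ := Submonoid.exists_list_of_mem_closure hg
    exact ⟨_, l, fun x hx => by simpa using hl x hx, hp, rfl⟩
  have hspec := fun g => Nat.find_spec (hex g)
  have hle : ∀ l : List G, (∀ x ∈ l, x ∈ S ∨ x⁻¹ ∈ S) → Nat.find (hex l.prod) ≤ l.length :=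
    fun l hl => Nat.find_min' _ ⟨l, hl, rfl, rfl⟩
  have hinv : ∀ g, Nat.find (hex g⁻¹) ≤ Nat.find (hex g) := by
    intro g
    obtain ⟨l, hl, hp, hn⟩ := hspec g
    rw [hn]
    apply Nat.find_min'
    refine ⟨(l.map fun x => x⁻¹).reverse, ?_, ?_, by simp⟩
    · intro x hx
      simp only [List.mem_reverse, List.mem_map] at hx
      obtain ⟨y, hy, rfl⟩ := hx
      rw [inv_inv]
      exact (hl y hy).symm
    · rw [← hp, List.prod_inv_reverse]
  refine ⟨fun g => Nat.find (hex g), ?_, ?_, ?_, ?_⟩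
  · intro g h
    unfold wordDist
    apply IsLeast.csInf_eq
    constructor
    · obtain ⟨l, hl, hp, hn⟩ := hspec (g⁻¹ * h)
      exact ⟨l, hl, hp, by exact_mod_cast hn⟩
    · rintro r ⟨l, hl, hp, rfl⟩
      have : Nat.find (hex (g⁻¹ * h)) ≤ l.length := Nat.find_min' _ ⟨l, hl, hp, rfl⟩
      exact_mod_cast this
  · intro g
    apply le_antisymm (hinv g)
    simpa using hinv g⁻¹
  · intro k
    have : Finite A := hA
    refine ((List.finite_length_le A k).image (fun l => (l.map Subtype.val).prod)).subset ?_
    intro g hg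
    obtain ⟨l, hl, hp, hn⟩ := hspec g
    refine ⟨l.attach.map (fun x => ⟨x.1, hl _ x.2⟩), ?_, ?_⟩
    · simp only [Set.mem_ofPred_eq, List.length_map, List.length_attach]
      exact hn ▸ hg
    · simp only [List.map_map]
      rw [← hp]
      congr 1
      exact List.attach_map_subtype_val l
  · intro g
    obtain ⟨l, hl, hp, hn⟩ := hspec g
    refine ⟨(l.take (l.length / 2)).prod, ?_, ?_⟩
    · refine (hle _ fun x hx => hl x (List.mem_of_mem_take hx)).trans ?_
      simp only [List.length_take]
      omega
    · have h2 : (l.take (l.length / 2)).prod⁻¹ * g = (l.drop (l.length / 2)).prod := by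
        rw [← hp]
        conv_lhs => rw [← List.prod_take_mul_prod_drop l (l.length / 2)]
        group
      have h3 := hle (l.drop (l.length / 2)) fun x hx => hl x (List.mem_of_mem_drop hx)
      simp only [h2]
      refine h3.trans ?_
      simp only [List.length_drop]
      omega

/-- A torsion-free, nontrivial, non-elementary hyperbolic group has trivial center. -/
theorem stmt_10 {G : Type*} [Group G] (hG : IsHyperbolicGroup G)
    (htf : ∀ g : G, g ≠ 1 → ∀ n : ℤ, n ≠ 0 → g ^ n ≠ 1)
    (hnontriv : Nontrivial G)
    (hne : ¬ ∃ H : Subgroup G, H.FiniteIndex ∧ IsCyclic H) :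
    Subgroup.center G = ⊥ := by
  obtain ⟨S, hS, hgen, δ, hδ, hyp⟩ := hG
  obtain ⟨N, hN, hinv, hfin, hmid⟩ := exists_len S hS hgen
  have four : ∀ w x y z : G, (N (x⁻¹ * y) : ℝ) + N (z⁻¹ * w) ≤
      max ((N (x⁻¹ * z) : ℝ) + N (y⁻¹ * w)) (N (y⁻¹ * z) + N (x⁻¹ * w)) + 2 * δ := by
    intro w x y z
    have h := hyp w x y z
    simp only [gromovProd, hN] at h
    rcases min_le_iff.1 (sub_le_iff_le_add.1 h) with h | h
    · have := le_max_right ((N (x⁻¹ * z) : ℝ) + N (y⁻¹ * w)) (N (y⁻¹ * z) + N (x⁻¹ * w))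
      have := le_max_left ((N (x⁻¹ * z) : ℝ) + N (y⁻¹ * w)) (N (y⁻¹ * z) + N (x⁻¹ * w))
      linarith
    · have := le_max_right ((N (x⁻¹ * z) : ℝ) + N (y⁻¹ * w)) (N (y⁻¹ * z) + N (x⁻¹ * w))
      linarith
  rw [Subgroup.eq_bot_iff_forall]
  intro z hz
  by_contra hz1
  apply hne
  refine ⟨Subgroup.zpowers z, ?_, inferInstance⟩
  -- a power of large length
  obtain ⟨n, hn⟩ : ∃ n : ℤ, 1 + 8 * δ < N (z ^ n) := by
    by_contra! hcon
    have hinj : Function.Injective (fun n : ℤ => z ^ n) := by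
      intro a b hab
      by_contra hne
      apply htf z hz1 (a - b) (sub_ne_zero.2 hne)
      simp only at hab
      rw [zpow_sub, hab, mul_inv_cancel]
    refine Set.infinite_range_of_injective hinj ((hfin ⌈1 + 8 * δ⌉₊).subset ?_)
    rintro _ ⟨n, rfl⟩
    have := (hcon n).trans (Nat.le_ceil _)
    exact_mod_cast this
  set u := z ^ n with hu
  have huc : ∀ g, g * u = u * g := by
    have : u ∈ Subgroup.center G := Subgroup.zpow_mem _ hz n
    exact fun g => Subgroup.mem_center_iff.1 this g
  have hconj : ∀ g, g⁻¹ * (u * g) = u := fun g => by rw [← huc]; group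
  have hcomm : ∀ g, g⁻¹ * u = u * g⁻¹ := fun g => huc _
  have key : ∀ g, (∀ k : ℤ, N g ≤ N (g * z ^ k)) → N g ≤ N u := by
    intro g hg
    by_contra! hlt
    have hlt' : (N u : ℝ) < N g := by exact_mod_cast hlt
    have g1 : (N g : ℝ) ≤ N (g * u) := by exact_mod_cast hg n
    have g2 : (N g : ℝ) ≤ N (g * u⁻¹) := by
      have := hg (-n); rw [zpow_neg] at this; exact_mod_cast this
    -- step one
    have h1 := four u 1 (g * u) g
    have e1 : (g * u)⁻¹ * u = g⁻¹ := by rw [huc]; group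
    have e2 : (g * u)⁻¹ * g = u⁻¹ := by group
    have e3 : N (g⁻¹ * u) = N (g * u⁻¹) := by
      rw [← hinv, huc]; congr 1; group
    rw [e1, e2, e3, hinv, hinv] at h1
    simp only [inv_one, one_mul] at h1
    -- step two
    have h2 := four 1 (g * u⁻¹) (g * u) g
    have e4 : (g * u⁻¹)⁻¹ * (g * u) = u * u := by group
    have e5 : (g * u⁻¹)⁻¹ * g = u := by group
    rw [e4, e5, e2] at h2
    simp only [mul_one, hinv] at h2
    have hL2 : (N (u * u) : ℝ) ≤ N u + 4 * δ := by
      rcases le_max_iff.1 (sub_le_iff_le_add.2 h1) with h1 | h1 <;>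
      rcases le_max_iff.1 (sub_le_iff_le_add.2 h2) with h2 | h2 <;> linarith
    -- step three
    obtain ⟨p, hp1, hp2⟩ := hmid u
    have hp1' : (N p : ℝ) ≤ N u / 2 := by
      have : 2 * N p ≤ N u := by omega
      have : (2 * N p : ℝ) ≤ N u := by exact_mod_cast this
      linarith
    have hp2' : (N (p⁻¹ * u) : ℝ) ≤ N u / 2 + 1 / 2 := by
      have : 2 * N (p⁻¹ * u) ≤ N u + 1 := by omega
      have : (2 * N (p⁻¹ * u) : ℝ) ≤ N u + 1 := by exact_mod_cast this
      linarith
    have h3 := four u p (u * u) 1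
    have e6 : (u * u)⁻¹ * u = u⁻¹ := by group
    rw [e6] at h3
    simp only [mul_one, hinv, inv_one, one_mul] at h3
    have h4 := four (u * u) p (p * u) u
    have e7 : p⁻¹ * (p * u) = u := by group
    have e8 : u⁻¹ * (u * u) = u := by group
    have e9 : (p * u)⁻¹ * u = p⁻¹ := by rw [huc]; group
    have e10 : (p * u)⁻¹ * (u * u) = p⁻¹ * u := by
      rw [huc, mul_inv_rev]; group
    rw [e7, e8, e9, e10, hinv] at h4
    rcases le_max_iff.1 (sub_le_iff_le_add.2 h3) with h3 | h3 <;>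
    rcases le_max_iff.1 (sub_le_iff_le_add.2 h4) with h4 | h4 <;> linarith
  have hsurj : ∀ q : G ⧸ Subgroup.zpowers z, ∃ g, N g ≤ N u ∧ (g : G ⧸ Subgroup.zpowers z) = q := by
    intro q
    obtain ⟨g, rfl⟩ := QuotientGroup.mk_surjective q
    obtain ⟨k, hk⟩ : ∃ k : ℤ, ∀ m : ℤ, N (g * z ^ k) ≤ N (g * z ^ m) := by
      have := WellFounded.has_min (measure fun k : ℤ => N (g * z ^ k)).wf Set.univ ⟨0, trivial⟩
      obtain ⟨k, -, hk⟩ := this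
      exact ⟨k, fun m => not_lt.1 (hk m trivial)⟩
    refine ⟨g * z ^ k, key _ fun m => ?_, ?_⟩
    · rw [mul_assoc, ← zpow_add]; exact hk _
    · rw [QuotientGroup.eq]
      refine ⟨-k, ?_⟩
      simp
  have : Finite {g | N g ≤ N u} := hfin _
  have : Finite (G ⧸ Subgroup.zpowers z) :=
    Finite.of_surjective (fun g : {g | N g ≤ N u} => (g.1 : G ⧸ Subgroup.zpowers z)) fun q => by
      obtain ⟨g, hg, h⟩ := hsurj q
      exact ⟨⟨g, hg⟩, h⟩
  exact Subgroup.finiteIndex_of_finite_quotient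
end

section
/- Let G be a hyperbolic group, let h ∈ G be an element of infinite order, and let ω ∈ G. Then ω is conjugate in G to at most two elements of the cyclic subgroup ⟨h⟩; equivalently, the set {n ∈ ℤ | ω is conjugate to h^n} has at most two elements. -/
open Filter Topology in
theorem aux_lim (a : ℕ → ℕ) (hsub : ∀ m n, a (m + n) ≤ a m + a n) (N : ℕ)
    (hN : ∀ k, k ≤ N * a k) (n m C : ℕ) (hle : ∀ k, a (m * k) ≤ C + a (n * k)) : m ≤ n := by
  have hs : Subadditive (fun k => (a k : ℝ)) := by
    intro p q
    show (a (p + q) : ℝ) ≤ a p + a q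
    exact_mod_cast hsub p q
  have hb : BddBelow (Set.range fun k => (a k : ℝ) / k) := by
    refine ⟨0, ?_⟩
    rintro _ ⟨k, rfl⟩
    positivity
  have ht := hs.tendsto_lim hb
  set l := hs.lim with hl
  have hNl : 1 ≤ (N : ℝ) * l := by
    have h1 : Tendsto (fun k : ℕ => (N : ℝ) * ((a k : ℝ) / k)) atTop (𝓝 (N * l)) :=
      ht.const_mul _
    refine ge_of_tendsto h1 ?_
    filter_upwards [eventually_gt_atTop 0] with k hk
    have hk' : (0 : ℝ) < k := by exact_mod_cast hk
    rw [← mul_div_assoc, le_div_iff₀ hk', one_mul]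
    exact_mod_cast hN k
  have hlpos : 0 < l := by
    by_contra hneg
    have : (N : ℝ) * l ≤ 0 := mul_nonpos_of_nonneg_of_nonpos (by positivity) (not_lt.mp hneg)
    linarith
  have key : ∀ q : ℕ, Tendsto (fun k : ℕ => (a (q * k) : ℝ) / k) atTop (𝓝 (q * l)) := by
    intro q
    rcases Nat.eq_zero_or_pos q with rfl | hq
    · simpa using tendsto_const_div_atTop_nhds_zero_nat ((a 0 : ℕ) : ℝ)
    · have h1 : Tendsto (fun k : ℕ => q * k) atTop atTop :=
        tendsto_id.const_mul_atTop' hq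
      have h2 := (ht.comp h1).const_mul (q : ℝ)
      refine h2.congr ?_
      intro k
      have hq' : (q : ℝ) ≠ 0 := by exact_mod_cast hq.ne'
      simp only [Function.comp]
      push_cast
      rcases Nat.eq_zero_or_pos k with rfl | hk
      · simp
      · have hk' : (k : ℝ) ≠ 0 := by exact_mod_cast hk.ne'
        field_simp
  have h3 : Tendsto (fun k : ℕ => (C : ℝ) / k + (a (n * k) : ℝ) / k) atTop (𝓝 (0 + n * l)) :=
    (tendsto_const_div_atTop_nhds_zero_nat (C : ℝ)).add (key n)
  have h4 : (m : ℝ) * l ≤ 0 + n * l := by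
    refine le_of_tendsto_of_tendsto (key m) h3 ?_
    refine Eventually.of_forall fun k => ?_
    show (a (m * k) : ℝ) / k ≤ (C : ℝ) / k + (a (n * k) : ℝ) / k
    rw [← add_div]
    have : (a (m * k) : ℝ) ≤ C + a (n * k) := by exact_mod_cast hle k
    gcongr
  have h5 : (m : ℝ) ≤ n := by
    rw [zero_add] at h4
    exact le_of_mul_le_mul_right h4 hlpos
  exact_mod_cast h5

/-- Growth of infinite order elements, abstract version. -/
theorem aux_growth {G : Type*} [Group G] (L : G → ℕ) (h1 : L 1 = 0)
    (hinv : ∀ g, L g⁻¹ = L g) (hmul : ∀ g h, L (g * h) ≤ L g + L h)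
    (hfin : ∀ r, {g | L g ≤ r}.Finite)
    (hsplit : ∀ g k, k ≤ L g → ∃ a b, a * b = g ∧ L a ≤ k ∧ L b ≤ L g - k)
    (δ : ℝ) (hδ : ∀ x y z w : G, (L (x⁻¹ * y) : ℝ) + L (z⁻¹ * w) ≤
      max ((L (x⁻¹ * z) : ℝ) + L (y⁻¹ * w)) (L (y⁻¹ * z) + L (x⁻¹ * w)) + 2 * δ)
    (g : G) (hord : ∀ n : ℤ, n ≠ 0 → g ^ n ≠ 1) :
    ∃ N : ℕ, ∀ k, k ≤ N * L (g ^ k) := by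
  classical
  obtain ⟨K, hK⟩ := exists_nat_ge (4 * δ + 1)
  let N := (hfin K).toFinset.card
  refine ⟨N, ?_⟩
  have hgpow : Function.Injective (fun n : ℕ => g ^ n) := by
    intro p q hpq
    by_contra hne
    have := hord ((p : ℤ) - q) (by omega)
    apply this
    rw [zpow_sub, zpow_natCast, zpow_natCast]
    simp only at hpq
    rw [hpq, mul_inv_cancel]
  have hex : ∀ M, ∃ R, ∃ c : G, ∀ i ≤ M, L (c⁻¹ * g ^ i) ≤ R := by
    intro M
    refine ⟨(Finset.range (M + 1)).sup (fun i => L (g ^ i)), 1, ?_⟩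
    intro i hi
    have := Finset.le_sup (f := fun i => L (g ^ i)) (Finset.mem_range.2 (Nat.lt_succ_of_le hi))
    simpa using this
  let r : ℕ → ℕ := fun M => Nat.find (hex M)
  have hr : ∀ M, ∃ c : G, ∀ i ≤ M, L (c⁻¹ * g ^ i) ≤ r M := fun M => Nat.find_spec (hex M)
  have hrmin : ∀ M R, (∃ c : G, ∀ i ≤ M, L (c⁻¹ * g ^ i) ≤ R) → r M ≤ R :=
    fun M R h => Nat.find_min' (hex M) h
  have hstep : ∀ M, r M + 1 ≤ r (M + N) := by
    intro M
    by_contra hcon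
    have hle : r (M + N) ≤ r M := by omega
    obtain ⟨c, hc⟩ := hr (M + N)
    have hball : ∀ k ≤ N, L (c⁻¹ * g ^ k * c) ≤ K := by
      intro k hk
      by_contra hbig
      push Not at hbig
      set D := L (c⁻¹ * g ^ k * c) with hD
      obtain ⟨a, b, hab, ha, hb⟩ := hsplit (c⁻¹ * g ^ k * c) (D / 2) (by omega)
      have hDK : (4 * δ + 1 : ℝ) < D := lt_of_le_of_lt hK (by exact_mod_cast hbig)
      have hdist : ∀ i ≤ M, L ((c * a)⁻¹ * g ^ (k + i)) < r M := by
        intro i hi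
        have e1 : L (c⁻¹ * g ^ (k + i)) ≤ r M := (hc _ (by omega)).trans hle
        have e2 : L ((g ^ k * c)⁻¹ * g ^ (k + i)) ≤ r M := by
          have : (g ^ k * c)⁻¹ * g ^ (k + i) = c⁻¹ * g ^ i := by
            rw [pow_add]; group
          rw [this]
          exact (hc _ (by omega)).trans hle
        have e3 := hδ c (g ^ k * c) (c * a) (g ^ (k + i))
        have e4 : L (c⁻¹ * (g ^ k * c)) = D := by rw [hD, mul_assoc]
        have e5 : L (c⁻¹ * (c * a)) ≤ D / 2 := by simpa using ha
        have e6 : L ((g ^ k * c)⁻¹ * (c * a)) ≤ D - D / 2 := by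
          have : (g ^ k * c)⁻¹ * (c * a) = b⁻¹ := by
            have : g ^ k * c = c * (a * b) := by rw [hab]; group
            rw [this]; group
          rw [this, hinv]
          exact hb
        rw [e4] at e3
        have e5' : (L (c⁻¹ * (c * a)) : ℝ) ≤ (D + 1) / 2 := by
          rw [le_div_iff₀ (by norm_num)]
          exact_mod_cast (by omega : L (c⁻¹ * (c * a)) * 2 ≤ D + 1)
        have e6' : (L ((g ^ k * c)⁻¹ * (c * a)) : ℝ) ≤ (D + 1) / 2 := by
          rw [le_div_iff₀ (by norm_num)]
          exact_mod_cast (by omega : L ((g ^ k * c)⁻¹ * (c * a)) * 2 ≤ D + 1)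
        have e1' : (L (c⁻¹ * g ^ (k + i)) : ℝ) ≤ r M := by exact_mod_cast e1
        have e2' : (L ((g ^ k * c)⁻¹ * g ^ (k + i)) : ℝ) ≤ r M := by exact_mod_cast e2
        have e7 := max_le (add_le_add e5' e2') (add_le_add e6' e1')
        have : (L ((c * a)⁻¹ * g ^ (k + i)) : ℝ) < r M := by linarith
        exact_mod_cast this
      have hpos : 0 < r M := lt_of_le_of_lt (Nat.zero_le _) (hdist 0 (Nat.zero_le _))
      have : r M ≤ r M - 1 := by
        apply hrmin
        refine ⟨(g ^ k)⁻¹ * (c * a), fun i hi => ?_⟩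
        have e : ((g ^ k)⁻¹ * (c * a))⁻¹ * g ^ i = (c * a)⁻¹ * g ^ (k + i) := by
          rw [pow_add]; group
        rw [e]
        have := hdist i hi
        omega
      omega
    have hcard : (Finset.range (N + 1)).card ≤ (hfin K).toFinset.card := by
      apply Finset.card_le_card_of_injOn (fun k => c⁻¹ * g ^ k * c)
      · intro k hk
        have hk' : k < N + 1 := by simpa using hk
        simpa using hball k (by omega)
      · intro p _ q _ hpq
        apply hgpow
        simpa using hpq
    rw [Finset.card_range] at hcard
    exact absurd hcard (by simp [N])
  have hrj : ∀ j, j ≤ r (j * N) := by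
    intro j
    induction j with
    | zero => exact Nat.zero_le _
    | succ j ih =>
      have := hstep (j * N)
      rw [Nat.succ_mul]
      omega
  have hB : ∀ j B, (∀ i ≤ j * N, L (g ^ i) ≤ B) → j ≤ B := by
    intro j B h
    refine (hrj j).trans (hrmin _ _ ⟨1, fun i hi => ?_⟩)
    simpa using h i hi
  have hmulpow : ∀ (x : G) q, L (x ^ q) ≤ q * L x := by
    intro x q
    induction q with
    | zero => simp [h1]
    | succ q ih =>
      rw [pow_succ, Nat.succ_mul]
      exact (hmul _ _).trans (by omega)
  intro k
  rcases Nat.eq_zero_or_pos k with rfl | hk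
  · exact Nat.zero_le _
  by_contra hlt
  push Not at hlt
  have hmain : ∀ q, q * k ≤ q * (N * L (g ^ k)) + k * L g := by
    intro q
    apply hB
    intro i hi
    have hi2 : i / k ≤ q * N := by
      apply Nat.div_le_of_le_mul
      calc i ≤ q * k * N := hi
        _ = k * (q * N) := by ring
    have hi3 : i % k ≤ k := (Nat.mod_lt _ hk).le
    have e : g ^ i = (g ^ k) ^ (i / k) * g ^ (i % k) := by
      rw [← pow_mul, ← pow_add, Nat.div_add_mod]
    rw [e]
    calc _ ≤ _ := hmul _ _
      _ ≤ (i / k) * L (g ^ k) + (i % k) * L g := add_le_add (hmulpow _ _) (hmulpow _ _)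
      _ ≤ (q * N) * L (g ^ k) + k * L g := by gcongr
      _ = _ := by ring
  have := hmain (k * L g + 1)
  have h2 : (k * L g + 1) * (N * L (g ^ k) + 1) ≤ (k * L g + 1) * k :=
    Nat.mul_le_mul_left _ hlt
  rw [Nat.mul_add] at h2
  omega

theorem aux_conj {G : Type*} [Group G] (L : G → ℕ)
    (hinv : ∀ g, L g⁻¹ = L g) (hmul : ∀ g h, L (g * h) ≤ L g + L h)
    (g : G) (N : ℕ) (hN : ∀ k, k ≤ N * L (g ^ k)) (m n : ℤ) (u : G)
    (hu : g ^ m = u * g ^ n * u⁻¹) : m.natAbs ≤ n.natAbs := by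
  have habs : ∀ (z : ℤ) (k : ℕ), L (g ^ (z.natAbs * k)) = L ((g ^ z) ^ k) := by
    intro z k
    rw [pow_mul]
    rcases Int.natAbs_eq z with h | h
    · conv_rhs => rw [h, zpow_natCast]
    · conv_rhs => rw [h, zpow_neg, zpow_natCast, inv_pow, hinv]
  refine aux_lim (fun k => L (g ^ k)) (fun p q => ?_) N hN _ _ (L u + L u) (fun k => ?_)
  · simp only [pow_add]; exact hmul _ _
  · simp only [habs]
    rw [hu, conj_pow]
    have e1 := hmul (u * (g ^ n) ^ k) u⁻¹
    have e2 := hmul u ((g ^ n) ^ k)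
    rw [hinv] at e1
    omega

/-- Natural-valued word length. -/
noncomputable def auxLen {G : Type*} [Group G] (S : Set G) (g : G) : ℕ :=
  sInf {n : ℕ | ∃ l : List G, (∀ x ∈ l, x ∈ S ∨ x⁻¹ ∈ S) ∧ l.prod = g ∧ l.length = n}

theorem auxLen_le {G : Type*} [Group G] (S : Set G) (l : List G)
    (hl : ∀ x ∈ l, x ∈ S ∨ x⁻¹ ∈ S) : auxLen S l.prod ≤ l.length :=
  Nat.sInf_le ⟨l, hl, rfl, rfl⟩

theorem auxLen_exists {G : Type*} [Group G] (S : Set G) (hS : Subgroup.closure S = ⊤) (g : G) :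
    ∃ l : List G, (∀ x ∈ l, x ∈ S ∨ x⁻¹ ∈ S) ∧ l.prod = g ∧ l.length = auxLen S g := by
  have hne : {n : ℕ | ∃ l : List G, (∀ x ∈ l, x ∈ S ∨ x⁻¹ ∈ S) ∧ l.prod = g ∧
      l.length = n}.Nonempty := by
    have hg : g ∈ Subgroup.closure S := by rw [hS]; trivial
    rw [← Subgroup.mem_toSubmonoid, Subgroup.closure_toSubmonoid] at hg
    obtain ⟨l, hl, hp⟩ := Submonoid.exists_list_of_mem_closure hg
    exact ⟨l.length, l, fun x hx => by simpa using hl x hx, hp, rfl⟩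
  exact Nat.sInf_mem hne

theorem wordDist_eq {G : Type*} [Group G] (S : Set G) (hS : Subgroup.closure S = ⊤) (g h : G) :
    wordDist S g h = auxLen S (g⁻¹ * h) := by
  unfold wordDist
  apply IsLeast.csInf_eq
  constructor
  · obtain ⟨l, hl, hp, hn⟩ := auxLen_exists S hS (g⁻¹ * h)
    exact ⟨l, hl, hp, by rw [hn]⟩
  · rintro _ ⟨l, hl, hp, rfl⟩
    rw [← hp]
    exact_mod_cast auxLen_le S l hl

theorem auxLen_mul {G : Type*} [Group G] (S : Set G) (hS : Subgroup.closure S = ⊤) (g h : G) :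
    auxLen S (g * h) ≤ auxLen S g + auxLen S h := by
  obtain ⟨l, hl, hp, hn⟩ := auxLen_exists S hS g
  obtain ⟨l', hl', hp', hn'⟩ := auxLen_exists S hS h
  have := auxLen_le S (l ++ l') (by
    intro x hx
    rcases List.mem_append.1 hx with hx | hx
    · exact hl x hx
    · exact hl' x hx)
  rw [List.prod_append, hp, hp', List.length_append, hn, hn'] at this
  exact this

theorem auxLen_inv_le {G : Type*} [Group G] (S : Set G) (hS : Subgroup.closure S = ⊤) (g : G) :
    auxLen S g⁻¹ ≤ auxLen S g := by
  obtain ⟨l, hl, hp, hn⟩ := auxLen_exists S hS g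
  have := auxLen_le S (l.map (fun x => x⁻¹)).reverse (by
    intro x hx
    simp only [List.mem_reverse, List.mem_map] at hx
    obtain ⟨y, hy, rfl⟩ := hx
    rw [inv_inv]
    exact (hl y hy).symm)
  rw [← List.prod_inv_reverse, hp, List.length_reverse, List.length_map, hn] at this
  exact this

theorem auxLen_inv {G : Type*} [Group G] (S : Set G) (hS : Subgroup.closure S = ⊤) (g : G) :
    auxLen S g⁻¹ = auxLen S g := by
  apply le_antisymm (auxLen_inv_le S hS g)
  simpa using auxLen_inv_le S hS g⁻¹

theorem auxLen_split {G : Type*} [Group G] (S : Set G) (hS : Subgroup.closure S = ⊤) (g : G)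
    (k : ℕ) : ∃ a b, a * b = g ∧ auxLen S a ≤ k ∧ auxLen S b ≤ auxLen S g - k := by
  obtain ⟨l, hl, hp, hn⟩ := auxLen_exists S hS g
  refine ⟨(l.take k).prod, (l.drop k).prod, ?_, ?_, ?_⟩
  · rw [List.prod_take_mul_prod_drop, hp]
  · refine (auxLen_le S _ fun x hx => hl x (List.mem_of_mem_take hx)).trans ?_
    exact List.length_take_le _ _
  · refine (auxLen_le S _ fun x hx => hl x (List.mem_of_mem_drop hx)).trans ?_
    rw [List.length_drop, hn]

open scoped Pointwise in
theorem auxLen_finite {G : Type*} [Group G] (S : Set G) (hS : Subgroup.closure S = ⊤)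
    (hf : S.Finite) (r : ℕ) : {g | auxLen S g ≤ r}.Finite := by
  induction r with
  | zero =>
    refine (Set.finite_singleton (1 : G)).subset ?_
    intro g hg
    obtain ⟨l, hl, hp, hn⟩ := auxLen_exists S hS g
    have hg' : auxLen S g ≤ 0 := hg
    have : l = [] := List.length_eq_zero_iff.1 (by omega)
    subst this
    simpa using hp.symm
  | succ r ih =>
    refine (ih.union ((hf.union hf.inv).mul ih)).subset ?_
    intro g hg
    obtain ⟨l, hl, hp, hn⟩ := auxLen_exists S hS g
    have hg' : auxLen S g ≤ r + 1 := hg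
    cases l with
    | nil =>
      left
      have : auxLen S g = 0 := by simpa using hn.symm
      show auxLen S g ≤ r
      omega
    | cons x t =>
      right
      refine Set.mem_mul.2 ⟨x, ?_, t.prod, ?_, by simpa using hp⟩
      · have := hl x (by simp)
        simpa using this
      · show auxLen S t.prod ≤ r
        refine (auxLen_le S t fun y hy => hl y (by simp [hy])).trans ?_
        simp only [List.length_cons] at hn
        omega

/-- In a hyperbolic group, an element `ω` is conjugate to at most two powers of an
element `h` of infinite order. -/
theorem stmt_12 {G : Type*} [Group G] (hG : IsHyperbolicGroup G)
    (h : G) (hord : ∀ n : ℤ, n ≠ 0 → h ^ n ≠ 1) (ω : G)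
    (n₁ n₂ n₃ : ℤ)
    (h₁ : ∃ u : G, h ^ n₁ = u * ω * u⁻¹)
    (h₂ : ∃ u : G, h ^ n₂ = u * ω * u⁻¹)
    (h₃ : ∃ u : G, h ^ n₃ = u * ω * u⁻¹) :
    n₁ = n₂ ∨ n₁ = n₃ ∨ n₂ = n₃ := by
  obtain ⟨S, hf, hS, δ, -, hδ⟩ := hG
  obtain ⟨N, hN⟩ := aux_growth (auxLen S) (by simpa using auxLen_le S [] (by simp))
    (auxLen_inv S hS) (auxLen_mul S hS) (auxLen_finite S hS hf)
    (fun g k _ => auxLen_split S hS g k) δ (by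
      intro x y z w
      have := hδ w x y z
      simp only [gromovProd, wordDist_eq S hS] at this
      have e : auxLen S (y⁻¹ * z) = auxLen S (y⁻¹ * z) := rfl
      rcases le_total ((auxLen S (x⁻¹ * z) : ℝ) + auxLen S (y⁻¹ * w))
        (auxLen S (y⁻¹ * z) + auxLen S (x⁻¹ * w)) with hh | hh
      · rw [max_eq_right hh]
        rw [min_eq_right (by linarith)] at this
        linarith
      · rw [max_eq_left hh]
        rw [min_eq_left (by linarith)] at this
        linarith) h hord
  have key : ∀ m n : ℤ, (∃ u : G, h ^ m = u * ω * u⁻¹) → (∃ u : G, h ^ n = u * ω * u⁻¹) →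
      m.natAbs ≤ n.natAbs := by
    rintro m n ⟨u, hu⟩ ⟨v, hv⟩
    refine aux_conj (auxLen S) (auxLen_inv S hS) (auxLen_mul S hS) h N hN m n (u * v⁻¹) ?_
    rw [hu, hv]
    group
  have a1 := key _ _ h₁ h₂
  have a2 := key _ _ h₂ h₃
  have a3 := key _ _ h₃ h₁
  omega
end

section
/- A torsion-free hyperbolic group has trivial root structure: if G is a torsion-free hyperbolic group, x, y ∈ G, and n is a nonzero integer with x^n = y^n, then x = y. -/
/-- Abstract package of the properties of the word length which are used. -/
structure LenData {G : Type*} [Group G] (ℓ : G → ℝ) (δ : ℝ) : Prop where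
  inv : ∀ a, ℓ a⁻¹ = ℓ a
  mul : ∀ a b, ℓ (a * b) ≤ ℓ a + ℓ b
  nonneg : ∀ a, 0 ≤ ℓ a
  fin : ∀ R : ℝ, {a | ℓ a ≤ R}.Finite
  mid : ∀ a, ∃ p, ℓ p ≤ ℓ a / 2 ∧ ℓ (p⁻¹ * a) ≤ ℓ a / 2 + 1
  four : ∀ w x y z, ℓ (x⁻¹ * y) + ℓ (z⁻¹ * w) ≤
    max (ℓ (x⁻¹ * z) + ℓ (y⁻¹ * w)) (ℓ (x⁻¹ * w) + ℓ (y⁻¹ * z)) + 2 * δ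

theorem LenData.quasi {G : Type*} [Group G] {ℓ : G → ℝ} {δ : ℝ} (H : LenData ℓ δ)
    {u a b : G} (ha : a * u = u * a)
    (hl : ℓ a + ℓ b + δ < ℓ u) :
    |(ℓ (u * (a * b)) - ℓ u) - (ℓ (u * a) - ℓ u) - (ℓ (u * b) - ℓ u)| ≤ 2 * δ := by
  have hau : u * a * u⁻¹ = a := by rw [← ha]; group
  have hau' : u * a⁻¹ = a⁻¹ * u := by
    rw [eq_inv_mul_iff_mul_eq, ← mul_assoc, ha]; group
  have e1 : (u⁻¹)⁻¹ * a = u * a := by group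
  have e2 : (u⁻¹)⁻¹ * (a * b) = u * (a * b) := by group
  have e3 : (a * u⁻¹)⁻¹ * a = u := by rw [mul_inv_rev, inv_inv]; group
  have e4 : (a * u⁻¹)⁻¹ * (a * b) = u * b := by rw [mul_inv_rev, inv_inv]; group
  have e5 : (u⁻¹)⁻¹ * (a * u⁻¹) = a := by rw [inv_inv, ← mul_assoc, hau]
  have e6 : a⁻¹ * (a * b) = b := by group
  have e7 : (a * b)⁻¹ * a = b⁻¹ := by group
  have f1 := H.four (a * b) u⁻¹ a (a * u⁻¹)
  have f2 := H.four a u⁻¹ (a * b) (a * u⁻¹)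
  have g1 : ℓ (a⁻¹ * (a * u⁻¹)) = ℓ u := by rw [← H.inv u]; congr 1; group
  have g2 : ℓ ((a * b)⁻¹ * (a * u⁻¹)) = ℓ (u * b) := by rw [← H.inv (u * b)]; congr 1; group
  rw [e1, e4, e5, e6, e2, g1] at f1
  rw [e2, e3, e5, e7, e1, g2, H.inv] at f2
  have t1 : ℓ u ≤ ℓ (u * a) + ℓ a := by
    have := H.mul (u * a) a⁻¹; rw [H.inv, mul_inv_cancel_right] at this; exact this
  have t2 : ℓ u ≤ ℓ (u * b) + ℓ b := by
    have := H.mul (u * b) b⁻¹; rw [H.inv, mul_inv_cancel_right] at this; exact this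
  have t3 : ℓ u ≤ ℓ (u * (a * b)) + (ℓ a + ℓ b) := by
    have := H.mul (u * (a * b)) (a * b)⁻¹
    rw [H.inv, mul_inv_cancel_right] at this
    linarith [H.mul a b]
  rw [abs_le]
  constructor
  · rcases max_cases (ℓ a + ℓ b) (ℓ (u * (a * b)) + ℓ u) with h | h <;> linarith
  · rcases max_cases (ℓ a + ℓ b) (ℓ (u * a) + ℓ (u * b)) with h | h <;> linarith

theorem LenData.disp {G : Type*} [Group G] {ℓ : G → ℝ} {δ : ℝ} (H : LenData ℓ δ) (hδ : 0 ≤ δ)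
    {u h p : G} {C : ℝ} (hC : 0 ≤ C) (hh : h * u = u * h)
    (hp : ℓ p ≤ ℓ u / 2) (hp' : ℓ (p⁻¹ * u) ≤ ℓ u / 2 + 1)
    (h1 : ℓ (u * h) ≤ ℓ u + C) (h2 : ℓ (u * h⁻¹) ≤ ℓ u + C)
    (hl : ℓ h + 2 < ℓ u / 2) :
    ℓ (p⁻¹ * (h * p)) ≤ C + 4 * δ + 1 := by
  have hhi : u * h⁻¹ = h⁻¹ * u := by
    rw [eq_inv_mul_iff_mul_eq, ← mul_assoc, hh]; group
  have tri : ℓ u ≤ ℓ p + ℓ (p⁻¹ * u) := by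
    have := H.mul p (p⁻¹ * u); rwa [mul_inv_cancel_left] at this
  have np := H.nonneg p
  have np' := H.nonneg (p⁻¹ * u)
  have f1 := H.four u p h⁻¹ 1
  have f2 := H.four u p (h⁻¹ * u) 1
  have f3 := H.four u p (h * p) 1
  have a1 : ℓ (p⁻¹ * h⁻¹) = ℓ (h * p) := by rw [← H.inv (h * p)]; congr 1; group
  have a2 : (h⁻¹)⁻¹ * u = u * h := by rw [inv_inv, hh]
  have a3 : (h⁻¹ * u)⁻¹ * u = h := by
    rw [← hhi]; group
  have a4 : (h⁻¹ * u)⁻¹ = (u * h⁻¹)⁻¹ := by rw [hhi]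
  have a5 : ℓ ((h * p)⁻¹ * u) = ℓ (p⁻¹ * (h⁻¹ * u)) := by congr 1; group
  simp only [mul_one, inv_one, one_mul, inv_inv, H.inv] at f1 f2 f3 a2
  rw [a1, ← hh] at *
  rw [a3, ← hhi] at f2
  rw [a5, ← hhi] at f3
  have k1 : ℓ (h * p) ≤ ℓ p + C + 2 * δ := by
    rcases max_cases (ℓ p + ℓ (h * u)) (ℓ (p⁻¹ * u) + ℓ h) with h | h <;> linarith
  have k2 : ℓ (p⁻¹ * (u * h⁻¹)) ≤ ℓ (p⁻¹ * u) + C + 2 * δ := by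
    rcases max_cases (ℓ p + ℓ h) (ℓ (p⁻¹ * u) + ℓ (u * h⁻¹)) with h | h <;> linarith
  rcases max_cases (ℓ p + ℓ (p⁻¹ * (u * h⁻¹))) (ℓ (p⁻¹ * u) + ℓ (h * p)) with h | h <;> linarith

theorem LenData.comm_bound {G : Type*} [Group G] {ℓ : G → ℝ} {δ : ℝ} (H : LenData ℓ δ)
    {u a b : G} (ha : a * u = u * a) (hb : b * u = u * b)
    (hl : 3 * ℓ a + 3 * ℓ b + δ < ℓ u) :
    ℓ (u * (a * b * a⁻¹ * b⁻¹)) ≤ ℓ u + 6 * δ := by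
  have na := H.nonneg a
  have nb := H.nonneg b
  have hc : (a * b * a⁻¹ * b⁻¹) * u = u * (a * b * a⁻¹ * b⁻¹) := by
    have ca : Commute a u := ha
    have cb : Commute b u := hb
    exact ((ca.mul_left cb).mul_left ca.inv_left).mul_left cb.inv_left
  have lc : ℓ (a * b * a⁻¹ * b⁻¹) ≤ 2 * ℓ a + 2 * ℓ b := by
    have := H.mul (a * b * a⁻¹) b⁻¹
    have := H.mul (a * b) a⁻¹
    have := H.mul a b
    simp only [H.inv] at *
    linarith
  have q1 := H.quasi (b := b) ha (by linarith)
  have q2 := H.quasi (b := a) hb (by linarith)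
  have q3 := H.quasi (b := b * a) hc (by linarith [H.mul b a])
  have e : (a * b * a⁻¹ * b⁻¹) * (b * a) = a * b := by group
  rw [e] at q3
  rw [abs_le] at q1 q2 q3
  linarith [q1.1, q1.2, q2.1, q2.2, q3.1, q3.2]

theorem LenData.finite_comm {G : Type*} [Group G] {ℓ : G → ℝ} {δ : ℝ} (H : LenData ℓ δ)
    (hδ : 0 ≤ δ) (g : G) (hg : ∀ n : ℤ, n ≠ 0 → g ^ n ≠ 1) :
    {c : G | ∃ a b : G, a * g = g * a ∧ b * g = g * b ∧ c = a * b * a⁻¹ * b⁻¹}.Finite := by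
  by_contra hinf
  set B : Set G := {a | ℓ a ≤ 6 * δ + 4 * δ + 1} with hB
  have hBf : B.Finite := H.fin _
  obtain ⟨T, hT, hTc⟩ := Set.Infinite.exists_subset_card_eq hinf (hBf.toFinset.card + 1)
  have hT' : ∀ c : G, ∃ a b : G, c ∈ T →
      (a * g = g * a ∧ b * g = g * b ∧ c = a * b * a⁻¹ * b⁻¹) := by
    intro c
    by_cases hc : c ∈ T
    · obtain ⟨a, b, h⟩ := hT hc
      exact ⟨a, b, fun _ => h⟩
    · exact ⟨1, 1, fun h => absurd h hc⟩
  choose a b hab using hT'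
  set D : ℝ := ∑ c ∈ T, (3 * ℓ (a c) + 3 * ℓ (b c)) with hD
  have hDle : ∀ c ∈ T, 3 * ℓ (a c) + 3 * ℓ (b c) ≤ D := fun c hc =>
    Finset.single_le_sum (f := fun c => 3 * ℓ (a c) + 3 * ℓ (b c))
      (fun i _ => by linarith [H.nonneg (a i), H.nonneg (b i)]) hc
  -- a long power
  obtain ⟨N, hN⟩ : ∃ N : ℤ, 2 * D + δ + 5 < ℓ (g ^ N) := by
    by_contra hcon
    push Not at hcon
    have hf := H.fin (2 * D + δ + 5)
    have hinj : Function.Injective (fun n : ℤ => g ^ n) := by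
      intro m n hmn
      by_contra hne
      refine hg (m - n) (sub_ne_zero.2 hne) ?_
      have : g ^ m = g ^ n := hmn
      rw [zpow_sub, this, mul_inv_cancel]
    exact Set.infinite_range_of_injective hinj (hf.subset (by rintro _ ⟨n, rfl⟩; exact hcon n))
  obtain ⟨p, hp, hp'⟩ := H.mid (g ^ N)
  have key : ∀ c ∈ T, p⁻¹ * (c * p) ∈ hBf.toFinset := by
    intro c hc
    obtain ⟨ha, hb, hcc⟩ := hab c hc
    have hd := hDle c hc
    have na := H.nonneg (a c)
    have nb := H.nonneg (b c)
    have ca : Commute (a c) (g ^ N) := Commute.zpow_right ha N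
    have cb : Commute (b c) (g ^ N) := Commute.zpow_right hb N
    have cc : Commute c (g ^ N) := by
      rw [hcc]; exact ((ca.mul_left cb).mul_left ca.inv_left).mul_left cb.inv_left
    have lc : ℓ c ≤ 2 * ℓ (a c) + 2 * ℓ (b c) := by
      have h1 := H.mul (a c * b c * (a c)⁻¹) (b c)⁻¹
      have h2 := H.mul (a c * b c) (a c)⁻¹
      have h3 := H.mul (a c) (b c)
      rw [← hcc] at h1
      simp only [H.inv] at *
      linarith
    rw [Set.Finite.mem_toFinset]
    have i1 := H.comm_bound ca cb (by linarith)
    have i2 := H.comm_bound cb ca (by linarith)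
    have ei : b c * a c * (b c)⁻¹ * (a c)⁻¹ = c⁻¹ := by
      have hcc' : c⁻¹ = (a c * b c * (a c)⁻¹ * (b c)⁻¹)⁻¹ := congrArg (fun z => z⁻¹) hcc
      rw [hcc']; group
    rw [← hcc] at i1
    rw [ei] at i2
    exact H.disp hδ (by linarith) cc hp hp' i1 i2 (by linarith)
  have hcard := Finset.card_le_card_of_injOn (fun c => p⁻¹ * (c * p)) key (by
    intro c _ d _ h
    simpa using h)
  omega

theorem LenData.unique_roots {G : Type*} [Group G] {ℓ : G → ℝ} {δ : ℝ} (H : LenData ℓ δ)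
    (hδ : 0 ≤ δ) (htf : ∀ g : G, g ≠ 1 → ∀ n : ℤ, n ≠ 0 → g ^ n ≠ 1)
    (x y : G) (n : ℤ) (hn : n ≠ 0) (hxy : x ^ n = y ^ n) : x = y := by
  by_cases hx : x ^ n = 1
  · have h1 : x = 1 := by
      by_contra h; exact htf x h n hn hx
    have h2 : y = 1 := by
      by_contra h; exact htf y h n hn (hxy ▸ hx)
    rw [h1, h2]
  set g := x ^ n with hgdef
  have hfin := H.finite_comm hδ g (htf g hx)
  let K : Subgroup G := Subgroup.centralizer {g}
  have memK : ∀ a : G, a ∈ K ↔ a * g = g * a := by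
    intro a
    rw [Subgroup.mem_centralizer_singleton_iff]
  have hxK : x ∈ K := (memK x).2 ((Commute.refl x).zpow_right n)
  have hyK : y ∈ K := (memK y).2 (by rw [hxy]; exact ((Commute.refl y).zpow_right n))
  have : Finite (commutatorSet K) := by
    refine Set.Finite.of_finite_image (f := Subtype.val) (hfin.subset ?_)
      Subtype.val_injective.injOn
    rintro _ ⟨_, ⟨a, b, rfl⟩, rfl⟩
    exact ⟨a, b, (memK _).1 a.2, (memK _).1 b.2, rfl⟩
  have hcf : Finite (commutator K) := inferInstance
  have hcomm : x * y = y * x := by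
    have hm : (⟨x, hxK⟩ : K) * ⟨y, hyK⟩ * (⟨x, hxK⟩ : K)⁻¹ * (⟨y, hyK⟩ : K)⁻¹ ∈ commutator K :=
      Subgroup.commutator_mem_commutator trivial trivial
    obtain ⟨m, hm0, hm1⟩ := (isOfFinOrder_of_finite
      (⟨_, hm⟩ : commutator K)).exists_pow_eq_one
    have hm2 : (x * y * x⁻¹ * y⁻¹) ^ m = 1 := by
      have := congrArg (fun z : commutator K => ((z : K) : G)) hm1
      simpa using this
    by_contra hne
    refine htf (x * y * x⁻¹ * y⁻¹) ?_ m (by exact_mod_cast hm0.ne') (by exact_mod_cast hm2)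
    intro h
    apply hne
    rw [mul_inv_eq_one, mul_inv_eq_iff_eq_mul] at h
    exact h
  by_contra hne
  refine htf (x * y⁻¹) (fun h => hne (mul_inv_eq_one.1 h)) n hn ?_
  have hc : Commute x y⁻¹ := Commute.inv_right hcomm
  rw [hc.mul_zpow, inv_zpow, ← hxy, mul_inv_cancel]

theorem exists_lenData {G : Type*} [Group G] (S : Set G) (hS : S.Finite)
    (hgen : Subgroup.closure S = ⊤) (δ : ℝ)
    (hyp : ∀ w x y z : G,
      gromovProd S w x y ≥ min (gromovProd S w x z) (gromovProd S w y z) - δ) :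
    ∃ ℓ : G → ℝ, LenData ℓ δ := by
  classical
  have hex : ∀ g : G, ∃ k : ℕ, ∃ l : List G, (∀ x ∈ l, x ∈ S ∨ x⁻¹ ∈ S) ∧ l.prod = g ∧
      l.length = k := by
    intro g
    have hg : g ∈ Subgroup.closure S := by rw [hgen]; trivial
    obtain ⟨l, h1, h2⟩ := Submonoid.exists_list_of_mem_closure
      (s := S ∪ S⁻¹) (x := g) (by rw [← Subgroup.closure_toSubmonoid]; exact hg)
    exact ⟨_, l, h1, h2, rfl⟩
  let len : G → ℕ := fun g => Nat.find (hex g)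
  have hspec : ∀ g, ∃ l : List G, (∀ x ∈ l, x ∈ S ∨ x⁻¹ ∈ S) ∧ l.prod = g ∧
      l.length = len g := fun g => Nat.find_spec (hex g)
  have hmin : ∀ l : List G, (∀ x ∈ l, x ∈ S ∨ x⁻¹ ∈ S) → len l.prod ≤ l.length :=
    fun l hl => Nat.find_min' (hex l.prod) ⟨l, hl, rfl, rfl⟩
  have hdist : ∀ g h, wordDist S g h = (len (g⁻¹ * h) : ℝ) := by
    intro g h
    refine IsLeast.csInf_eq ⟨?_, ?_⟩
    · obtain ⟨l, h1, h2, h3⟩ := hspec (g⁻¹ * h)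
      exact ⟨l, h1, h2, by rw [h3]⟩
    · rintro r ⟨l, h1, h2, rfl⟩
      rw [← h2]
      exact_mod_cast hmin l h1
  have hmul : ∀ a b, len (a * b) ≤ len a + len b := by
    intro a b
    obtain ⟨l, h1, h2, h3⟩ := hspec a
    obtain ⟨l', h1', h2', h3'⟩ := hspec b
    have := hmin (l ++ l') (by
      intro x hx
      rcases List.mem_append.1 hx with h | h
      · exact h1 x h
      · exact h1' x h)
    rw [List.prod_append, List.length_append, h2, h2', h3, h3'] at this
    exact this
  have hinv1 : ∀ a, len a⁻¹ ≤ len a := by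
    intro a
    obtain ⟨l, h1, h2, h3⟩ := hspec a
    have := hmin (l.map (fun x => x⁻¹)).reverse (by
      intro x hx
      simp only [List.mem_reverse, List.mem_map] at hx
      obtain ⟨z, hz, rfl⟩ := hx
      rw [inv_inv]
      exact (h1 z hz).symm)
    rw [← List.prod_inv_reverse, h2, List.length_reverse, List.length_map, h3] at this
    exact this
  have hinv : ∀ a, len a⁻¹ = len a := fun a =>
    le_antisymm (hinv1 a) (by simpa using hinv1 a⁻¹)
  refine ⟨fun g => (len g : ℝ), ⟨fun a => by rw [hinv], fun a b => by exact_mod_cast hmul a b,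
    fun a => Nat.cast_nonneg _, ?_, ?_, ?_⟩⟩
  · intro R
    let T : Set G := S ∪ S⁻¹
    have hT : T.Finite := hS.union hS.inv
    have : Finite T := hT
    have hf : {l : List T | l.length ≤ ⌊R⌋₊}.Finite := List.finite_length_le T ⌊R⌋₊
    refine (hf.image (fun l => (l.map Subtype.val).prod)).subset ?_
    intro a ha
    obtain ⟨l, h1, h2, h3⟩ := hspec a
    have h1' : ∀ x ∈ l, x ∈ T := h1
    refine ⟨l.attach.map (fun x => ⟨x.1, h1' x.1 x.2⟩), ?_, ?_⟩
    · simp only [Set.mem_ofPred_eq, List.length_map, List.length_attach, h3]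
      exact Nat.le_floor ha
    · simp [List.map_map, Function.comp_def, h2]
  · intro a
    obtain ⟨l, h1, h2, h3⟩ := hspec a
    refine ⟨(l.take (l.length / 2)).prod, ?_, ?_⟩
    · have h := hmin (l.take (l.length / 2)) (fun x hx => h1 x (List.mem_of_mem_take hx))
      rw [List.length_take] at h
      have h' : 2 * len (l.take (l.length / 2)).prod ≤ len a := by omega
      have h'' : (2 : ℝ) * (len (l.take (l.length / 2)).prod : ℝ) ≤ len a := by exact_mod_cast h'
      linarith
    · have h := hmin (l.drop (l.length / 2)) (fun x hx => h1 x (List.mem_of_mem_drop hx))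
      have e : ((l.take (l.length / 2)).prod)⁻¹ * a = (l.drop (l.length / 2)).prod := by
        rw [inv_mul_eq_iff_eq_mul, List.prod_take_mul_prod_drop, h2]
      rw [List.length_drop] at h
      rw [e]
      have h' : 2 * len (l.drop (l.length / 2)).prod ≤ len a + 2 := by omega
      have h'' : (2 : ℝ) * (len (l.drop (l.length / 2)).prod : ℝ) ≤ len a + 2 := by
        exact_mod_cast h'
      linarith
  · intro w x y z
    have h := hyp w x y z
    simp only [gromovProd, hdist] at h
    rcases le_total ((len (x⁻¹ * z) : ℝ) + len (y⁻¹ * w)) (len (x⁻¹ * w) + len (y⁻¹ * z))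
      with h1 | h1
    · rw [max_eq_right h1]
      rcases min_choice (((len (x⁻¹ * w) : ℝ) + len (z⁻¹ * w) - len (x⁻¹ * z)) / 2)
        (((len (y⁻¹ * w) : ℝ) + len (z⁻¹ * w) - len (y⁻¹ * z)) / 2) with h2 | h2 <;>
      rw [h2] at h <;> linarith
    · rw [max_eq_left h1]
      rcases min_choice (((len (x⁻¹ * w) : ℝ) + len (z⁻¹ * w) - len (x⁻¹ * z)) / 2)
        (((len (y⁻¹ * w) : ℝ) + len (z⁻¹ * w) - len (y⁻¹ * z)) / 2) with h2 | h2 <;>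
      rw [h2] at h <;> linarith

/-- A torsion-free hyperbolic group has trivial root structure: `x^n = y^n` for some
nonzero integer `n` implies `x = y`. -/
theorem stmt_14 {G : Type*} [Group G] (hG : IsHyperbolicGroup G)
    (htf : ∀ g : G, g ≠ 1 → ∀ n : ℤ, n ≠ 0 → g ^ n ≠ 1)
    (x y : G) (n : ℤ) (hn : n ≠ 0) (hxy : x ^ n = y ^ n) :
    x = y := by
  obtain ⟨S, hS, hgen, δ, hδ, hyp⟩ := hG
  obtain ⟨ℓ, H⟩ := exists_lenData S hS hgen δ hyp
  exact H.unique_roots hδ htf x y n hn hxy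
end
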